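/- arXiv:2605.03631 — 2 statements merged into one kernel-verified Lean document; each statement's English description precedes it below -/
import Mathlib

section
/- Let u ≥ 1 and let m : Fin u → (V → 𝔽₂) be signatures each of odd weight, and let H : Matrix V (Fin u × V) 𝔽₂ be the horizontal concatenation of the corresponding dyadic matrices, i.e., H a (j, b) = m j (a + b). Then H has full rank: Matrix.rank H = 2^ℓ. -/
/-- `V ℓ` is the 𝔽₂-vector space `Fin ℓ → ZMod 2` with bitwise-XOR addition. -/
abbrev V (ℓ : ℕ) := Fin ℓ → ZMod 2

lemma V.add_self {ℓ : ℕ} (v : V ℓ) : v + v = 0 :=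
  funext fun i => CharTwo.add_self_eq_zero (v i)

/-- A signature of odd weight sums to `1` over 𝔽₂. -/
lemma sum_eq_one_of_odd_weight {α : Type*} [Fintype α] (f : α → ZMod 2)
    (hf : Odd (Finset.univ.filter fun x => f x ≠ 0).card) : ∑ x, f x = 1 := by
  have hval : ∀ z : ZMod 2, z = if z ≠ 0 then 1 else 0 := by decide
  rw [Finset.sum_congr rfl fun x _ => hval (f x), Finset.sum_boole]
  exact ZMod.natCast_eq_one_iff_odd.mpr hf

/-- A dyadic matrix whose signature has odd weight is its own inverse. -/
lemma dyadic_mul_self {ℓ : ℕ} (m : V ℓ → ZMod 2)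
    (hm : Odd (Finset.univ.filter fun x => m x ≠ 0).card) :
    (Matrix.of fun a b => m (a + b)) * (Matrix.of fun a b => m (a + b)) = 1 := by
  ext a c
  simp only [Matrix.mul_apply, Matrix.of_apply]
  rcases eq_or_ne a c with rfl | hac
  · have hsq : ∀ z : ZMod 2, z * z = z := by decide
    simp only [add_comm _ a, hsq, Matrix.one_apply_eq]
    rw [← sum_eq_one_of_odd_weight m hm]
    exact Equiv.sum_comp (Equiv.addLeft a) m
  · rw [Matrix.one_apply_ne hac]
    refine Finset.sum_involution (fun b _ => b + (a + c)) ?_ ?_ (by simp) ?_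
    · intro b _
      have hl : a + (b + (a + c)) = b + c := by
        rw [show a + (b + (a + c)) = (a + a) + (b + c) by abel, V.add_self, zero_add]
      have hr : b + (a + c) + c = a + b := by
        rw [show b + (a + c) + c = (a + b) + (c + c) by abel, V.add_self, add_zero]
      rw [hl, hr, mul_comm (m (b + c)), CharTwo.add_self_eq_zero]
    · intro b _ _ h
      exact hac (add_right_cancel ((add_eq_left.mp h).trans (V.add_self c).symm))
    · intro b _
      rw [add_assoc, V.add_self, add_zero]

/-- The horizontal concatenation of `u` dyadic blocks, each with a signature of odd
weight, has full rank `2^ℓ`. -/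
theorem constructionB_fullRank (ℓ u : ℕ) (hu : 1 ≤ u)
    (m : Fin u → V ℓ → ZMod 2)
    (hodd : ∀ j : Fin u, Odd (Finset.univ.filter fun x => m j x ≠ 0).card)
    (H : Matrix (V ℓ) (Fin u × V ℓ) (ZMod 2))
    (hH : ∀ (a : V ℓ) (j : Fin u) (b : V ℓ), H a (j, b) = m j (a + b)) :
    H.rank = 2 ^ ℓ := by
  have hcard : Fintype.card (V ℓ) = 2 ^ ℓ := by simp
  let i : Fin u := ⟨0, hu⟩
  let K : Matrix (Fin u × V ℓ) (V ℓ) (ZMod 2) :=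
    Matrix.of fun p c => if p.1 = i then m i (p.2 + c) else 0
  have hHK : H * K = 1 := by
    rw [← dyadic_mul_self (m i) (hodd i)]
    ext a c
    simp only [Matrix.mul_apply, Fintype.sum_prod_type_right, K, Matrix.of_apply, hH, mul_ite,
      mul_zero, Finset.sum_ite_eq', Finset.mem_univ, if_true]
  apply le_antisymm
  · exact hcard ▸ H.rank_le_card_height
  · have hle := Matrix.rank_mul_le_left H K
    rwa [hHK, Matrix.rank_one, hcard] at hle
end

section
/- Let ρ : Fin 2 → Fin 2 → V and let M : Matrix (Fin 2 × V) (Fin 2 × V) 𝔽₂ be the 2 × 2 array of DPMs with M (i, a) (j, b) = 1 if a + b = ρ i j and 0 otherwise. Set α := ρ 0 0 + ρ 1 1 + ρ 0 1 + ρ 1 0 ∈ V. Then the girth of the Tanner graph of M equals 4 · addOrderOf α; in particular it is 4 if α = 0 and 8 otherwise. -/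
/-- The Tanner graph of a binary matrix `H`: `Sum.inl r` and `Sum.inr c` are adjacent
iff `H r c = 1`, and there are no other adjacencies. -/
def tanner {R C : Type*} (H : Matrix R C (ZMod 2)) : SimpleGraph (R ⊕ C) :=
  SimpleGraph.fromRel fun x y =>
    match x, y with
    | Sum.inl r, Sum.inr c => H r c = 1
    | _, _ => False

section Tanner

variable {R C : Type*} (H : Matrix R C (ZMod 2))

@[simp]
theorem tanner_adj_inl_inr (r : R) (c : C) :
    (tanner H).Adj (Sum.inl r) (Sum.inr c) ↔ H r c = 1 := by
  simp [tanner]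

@[simp]
theorem tanner_adj_inr_inl (r : R) (c : C) :
    (tanner H).Adj (Sum.inr c) (Sum.inl r) ↔ H r c = 1 := by
  simp [tanner]

@[simp]
theorem not_tanner_adj_inl_inl (r s : R) : ¬ (tanner H).Adj (Sum.inl r) (Sum.inl s) := by
  simp [tanner]

@[simp]
theorem not_tanner_adj_inr_inr (c d : C) : ¬ (tanner H).Adj (Sum.inr c) (Sum.inr d) := by
  simp [tanner]

theorem tanner_even_length {u : R ⊕ C} (w : (tanner H).Walk u u) : Even w.length := by
  let c : (tanner H).Coloring Bool := SimpleGraph.Coloring.mk Sum.isLeft (by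
    rintro (_ | _) (_ | _) <;> simp)
  simp [c.even_length_iff_congr w]

theorem tanner_four_le_length {u : R ⊕ C} {w : (tanner H).Walk u u} (hw : w.IsCycle) :
    4 ≤ w.length := by
  have := hw.three_le_length
  have := tanner_even_length H w
  grind

end Tanner

namespace DPMArray

variable {ℓ : ℕ} {ρ : Fin 2 → Fin 2 → V ℓ}
  {M : Matrix (Fin 2 × V ℓ) (Fin 2 × V ℓ) (ZMod 2)}

/-- The index of the block row or block column containing a vertex. -/
def block : (Fin 2 × V ℓ) ⊕ (Fin 2 × V ℓ) → Fin 2 :=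
  Sum.elim Prod.fst Prod.fst

/-- `M` is the `2 × 2` array of dyadic permutation matrices with shifts `ρ`. -/
def IsDPMArray (ρ : Fin 2 → Fin 2 → V ℓ)
    (M : Matrix (Fin 2 × V ℓ) (Fin 2 × V ℓ) (ZMod 2)) : Prop :=
  ∀ (i : Fin 2) (a : V ℓ) (j : Fin 2) (b : V ℓ),
    M (i, a) (j, b) = if a + b = ρ i j then 1 else 0

theorem entry_eq_one_iff (hM : IsDPMArray ρ M)
    (i j : Fin 2) (a b : V ℓ) :
    M (i, a) (j, b) = 1 ↔ a + b = ρ i j := by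
  simp [hM i a j b]

theorem adj_of_forall_add_eq (hM : IsDPMArray ρ M)
    (i j : Fin 2) (a b : V ℓ) (h : ∀ t, a t + b t = ρ i j t) :
    (tanner M).Adj (.inl (i, a)) (.inr (j, b)) := by
  rw [tanner_adj_inl_inr, entry_eq_one_iff hM]
  exact funext h

/-- Each vertex has at most one neighbour in each block. -/
theorem block_ne_of_adj (hM : IsDPMArray ρ M)
    {x y z : (Fin 2 × V ℓ) ⊕ (Fin 2 × V ℓ)}
    (hxy : (tanner M).Adj x y) (hyz : (tanner M).Adj y z) (hxz : x ≠ z) :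
    block x ≠ block z := by
  rcases x with ⟨i, a⟩ | ⟨i, a⟩ <;> rcases y with ⟨j, b⟩ | ⟨j, b⟩ <;>
    rcases z with ⟨k, c⟩ | ⟨k, c⟩ <;> simp [entry_eq_one_iff hM] at hxy hyz
  all_goals
    intro h
    simp only [block, Sum.elim_inl, Sum.elim_inr] at h
    subst h
    grind

theorem sum_eq_zero_of_four_cycle (hM : IsDPMArray ρ M)
    {x y z u : (Fin 2 × V ℓ) ⊕ (Fin 2 × V ℓ)}
    (hxy : (tanner M).Adj x y) (hyz : (tanner M).Adj y z) (hzu : (tanner M).Adj z u)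
    (hux : (tanner M).Adj u x) (hxz : x ≠ z) (hyu : y ≠ u) :
    ρ 0 0 + ρ 1 1 + ρ 0 1 + ρ 1 0 = 0 := by
  have hbxz := block_ne_of_adj hM hxy hyz hxz
  have hbyu := block_ne_of_adj hM hyz hzu hyu
  rcases x with ⟨i, a⟩ | ⟨i, a⟩ <;> rcases y with ⟨j, b⟩ | ⟨j, b⟩ <;>
    rcases z with ⟨k, c⟩ | ⟨k, c⟩ <;> rcases u with ⟨l, d⟩ | ⟨l, d⟩ <;>
    simp [entry_eq_one_iff hM] at hxy hyz hzu hux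
  all_goals
    simp only [block, Sum.elim_inl, Sum.elim_inr] at hbxz hbyu
    funext t
    replace hxy := congrFun hxy t
    replace hyz := congrFun hyz t
    replace hzu := congrFun hzu t
    replace hux := congrFun hux t
    fin_cases i <;> fin_cases j <;> fin_cases k <;> fin_cases l <;> simp at *
    all_goals grind

theorem eight_le_length (hM : IsDPMArray ρ M)
    (hα : ρ 0 0 + ρ 1 1 + ρ 0 1 + ρ 1 0 ≠ 0)
    {u : (Fin 2 × V ℓ) ⊕ (Fin 2 × V ℓ)} {w : (tanner M).Walk u u}
    (hw : w.IsCycle) : 8 ≤ w.length := by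
  have h3 := hw.three_le_length
  obtain ⟨n, hn⟩ := tanner_even_length M w
  by_contra! hlt
  have hadj (k : ℕ) (hk : k < w.length) := w.adj_getVert_succ hk
  have hne (i j : ℕ) (hij : i < j) (hj : j < w.length) : w.getVert i ≠ w.getVert j := fun h =>
    hij.ne (hw.getVert_injOn' (by simp; lia) (by simp; lia) h)
  have hlast : w.getVert w.length = w.getVert 0 := by simp
  obtain rfl | rfl : n = 2 ∨ n = 3 := by lia
  · rw [hn] at hadj hne hlast
    have h30 := hadj 3 (by simp)
    simp only [Nat.reduceAdd] at h30 hlast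
    rw [hlast] at h30
    exact hα (sum_eq_zero_of_four_cycle hM (hadj 0 (by simp)) (hadj 1 (by simp))
      (hadj 2 (by simp)) h30 (hne 0 2 (by simp) (by simp)) (hne 1 3 (by simp) (by simp)))
  · rw [hn] at hadj hne hlast
    have h50 := hadj 5 (by simp)
    simp only [Nat.reduceAdd] at h50 hlast
    rw [hlast] at h50
    have h02 := block_ne_of_adj hM (hadj 0 (by simp)) (hadj 1 (by simp))
      (hne 0 2 (by simp) (by simp))
    have h24 := block_ne_of_adj hM (hadj 2 (by simp)) (hadj 3 (by simp))
      (hne 2 4 (by simp) (by simp))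
    have h40 := block_ne_of_adj hM (hadj 4 (by simp)) h50 (hne 0 4 (by simp) (by simp)).symm
    simp only [Nat.reduceAdd] at h02 h24 h40
    lia

theorem exists_isCycle_length_eq_four (hM : IsDPMArray ρ M)
    (hα : ρ 0 0 + ρ 1 1 + ρ 0 1 + ρ 1 0 = 0) :
    ∃ u, ∃ w : (tanner M).Walk u u, w.IsCycle ∧ w.length = 4 := by
  have hadj := adj_of_forall_add_eq hM
  have hαt (t) : ρ 0 0 t + ρ 1 1 t + ρ 0 1 t + ρ 1 0 t = 0 := congrFun hα t
  have h₁ := hadj 0 0 0 (ρ 0 0) (by simp)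
  have h₂ := (hadj 1 0 (ρ 0 0 + ρ 1 0) (ρ 0 0) (by simp; grind)).symm
  have h₃ := hadj 1 1 (ρ 0 0 + ρ 1 0) (ρ 0 1) (by simp; grind)
  have h₄ := (hadj 0 1 0 (ρ 0 1) (by simp)).symm
  refine ⟨_, .cons h₁ (.cons h₂ (.cons h₃ (.cons h₄ .nil))), ?_, rfl⟩
  simp [SimpleGraph.Walk.cons_isCycle_iff]

theorem exists_isCycle_length_eq_eight (hM : IsDPMArray ρ M)
    (hα : ρ 0 0 + ρ 1 1 + ρ 0 1 + ρ 1 0 ≠ 0) :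
    ∃ u, ∃ w : (tanner M).Walk u u, w.IsCycle ∧ w.length = 8 := by
  obtain ⟨α, hαdef⟩ : ∃ α, α = ρ 0 0 + ρ 1 1 + ρ 0 1 + ρ 1 0 := ⟨_, rfl⟩
  rw [← hαdef] at hα
  have hadj := adj_of_forall_add_eq hM
  have hαt (t) : α t = ρ 0 0 t + ρ 1 1 t + ρ 0 1 t + ρ 1 0 t := by simp [hαdef]
  have h₁ := hadj 0 0 0 (ρ 0 0) (by simp)
  have h₂ := (hadj 1 0 (ρ 0 0 + ρ 1 0) (ρ 0 0) (by simp; grind)).symm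
  have h₃ := hadj 1 1 (ρ 0 0 + ρ 1 0) (α + ρ 0 1) (by simp; grind)
  have h₄ := (hadj 0 1 α (α + ρ 0 1) (by simp; grind)).symm
  have h₅ := hadj 0 0 α (α + ρ 0 0) (by simp; grind)
  have h₆ := (hadj 1 0 (α + (ρ 0 0 + ρ 1 0)) (α + ρ 0 0) (by simp; grind)).symm
  have h₇ := hadj 1 1 (α + (ρ 0 0 + ρ 1 0)) (ρ 0 1) (by simp; grind)
  have h₈ := (hadj 0 1 0 (ρ 0 1) (by simp)).symm
  refine ⟨_, .cons h₁ (.cons h₂ (.cons h₃ (.cons h₄ (.cons h₅ (.cons h₆ (.cons h₇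
    (.cons h₈ .nil))))))), ?_, rfl⟩
  simp [SimpleGraph.Walk.cons_isCycle_iff, hα, hα.symm]

end DPMArray

theorem SimpleGraph.girth_eq_of_isCycle {W : Type*} {G : SimpleGraph W} {n : ℕ}
    (hle : ∀ u (w : G.Walk u u), w.IsCycle → n ≤ w.length)
    (hex : ∃ u, ∃ w : G.Walk u u, w.IsCycle ∧ w.length = n) : G.girth = n := by
  obtain ⟨u, w, hw, rfl⟩ := hex
  refine le_antisymm (girth_le_length hw) ?_
  obtain ⟨v, c, hc, hlen⟩ := exists_girth_eq_length.mpr fun h => h w hw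
  exact hlen ▸ hle v c hc

/-- The girth of the Tanner graph of a `2 × 2` array of DPMs equals
`4 · addOrderOf α` where `α = ρ 0 0 + ρ 1 1 + ρ 0 1 + ρ 1 0`; in particular it is `4`
if `α = 0` and `8` otherwise. -/
theorem dpmArray2x2_girth (ℓ : ℕ)
    (ρ : Fin 2 → Fin 2 → V ℓ)
    (M : Matrix (Fin 2 × V ℓ) (Fin 2 × V ℓ) (ZMod 2))
    (hM : ∀ (i : Fin 2) (a : V ℓ) (j : Fin 2) (b : V ℓ),
      M (i, a) (j, b) = if a + b = ρ i j then 1 else 0) :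
    (tanner M).girth = ((4 * addOrderOf (ρ 0 0 + ρ 1 1 + ρ 0 1 + ρ 1 0) : ℕ) : ℕ∞) ∧
    (ρ 0 0 + ρ 1 1 + ρ 0 1 + ρ 1 0 = 0 → (tanner M).girth = 4) ∧
    (ρ 0 0 + ρ 1 1 + ρ 0 1 + ρ 1 0 ≠ 0 → (tanner M).girth = 8) := by
  have girth_four (hα : ρ 0 0 + ρ 1 1 + ρ 0 1 + ρ 1 0 = 0) : (tanner M).girth = 4 :=
    SimpleGraph.girth_eq_of_isCycle (fun _ _ => tanner_four_le_length M)
      (DPMArray.exists_isCycle_length_eq_four hM hα)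
  have girth_eight (hα : ρ 0 0 + ρ 1 1 + ρ 0 1 + ρ 1 0 ≠ 0) : (tanner M).girth = 8 :=
    SimpleGraph.girth_eq_of_isCycle (fun _ _ => DPMArray.eight_le_length hM hα)
      (DPMArray.exists_isCycle_length_eq_eight hM hα)
  refine ⟨?_, fun hα => by simp [girth_four hα], fun hα => by simp [girth_eight hα]⟩
  by_cases hα : ρ 0 0 + ρ 1 1 + ρ 0 1 + ρ 1 0 = 0
  · simp [girth_four hα, hα]
  · have horder : addOrderOf (ρ 0 0 + ρ 1 1 + ρ 0 1 + ρ 1 0) = 2 :=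
      addOrderOf_eq_prime (by rw [two_nsmul, ZModModule.add_self]) hα
    simp [girth_eight hα, horder]
end
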